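/- arXiv:2404.03139 — 2 statements merged into one kernel-verified Lean document; each statement's English description precedes it below -/
import Mathlib

section
/- Fix a node i, a number of layers L ≥ 0, weight vectors w^{(0)}, …, w^{(L)} ∈ ℝ^d, and M ≥ 0, and suppose ⟨X_j, w^{(l)}⟩ is square-integrable with Var[⟨X_j, w^{(l)}⟩] ≤ M for all nodes j and all 0 ≤ l ≤ L. Define Z = Σ_{l=0}^{L} Σ_{j=1}^{N} (P_rw^l)_{ij} ⟨X_j, w^{(l)}⟩, the l-hop prediction homogeneity β^{(l)} = Σ_{j=1}^{N} (P_rw^l)_{ij} E[⟨X_j, w^{(l)}⟩], and the l-hop collision probability α^{(l)} = Σ_{j=1}^{N} ((P_rw^l)_{ij})². Then E[Z] = Σ_{l=0}^{L} β^{(l)}, Var[Z] ≤ M (L+1) Σ_{l=0}^{L} α^{(l)}, and consequently, if M > 0 and Var[Z] > 0, then R = (E[Z])² / Var[Z] ≥ (Σ_{l=0}^{L} β^{(l)})² / (M (L+1) Σ_{l=0}^{L} α^{(l)}). -/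
open MeasureTheory ProbabilityTheory Finset

/-!
Nodes are independent of each other, but the layers reuse the same node features and may be
arbitrarily correlated. So within a layer only the diagonal terms contribute to the variance, which
gives `M * α l`, while across the layers all one has is the Cauchy–Schwarz inequality, and this
costs the factor `L + 1`.
-/

section Moments

variable {Ω ι κ : Type*} [MeasurableSpace Ω] {μ : Measure Ω}

theorem integral_sum_sum_mul {s : Finset κ} {t : Finset ι} (c : κ → ι → ℝ) {Y : κ → ι → Ω → ℝ}
    (hY : ∀ l ∈ s, ∀ j ∈ t, Integrable (Y l j) μ) :
    ∫ ω, ∑ l ∈ s, ∑ j ∈ t, c l j * Y l j ω ∂μ =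
      ∑ l ∈ s, ∑ j ∈ t, c l j * ∫ ω, Y l j ω ∂μ := by
  have hcY : ∀ l ∈ s, ∀ j ∈ t, Integrable (fun ω => c l j * Y l j ω) μ :=
    fun l hl j hj => (hY l hl j hj).const_mul _
  rw [integral_finsetSum s fun l hl => integrable_finsetSum t (hcY l hl)]
  refine sum_congr rfl fun l hl => ?_
  simp only [integral_finsetSum t (hcY l hl), integral_const_mul]

theorem covariance_sum_mul_eq_zero_of_indepFun [Fintype κ] {X Y : Ω → κ → ℝ} (hXY : X ⟂ᵢ[μ] Y)
    {u v : κ → ℝ} (hX : MemLp (fun ω => ∑ k, X ω k * u k) 2 μ)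
    (hY : MemLp (fun ω => ∑ k, Y ω k * v k) 2 μ) :
    cov[fun ω => ∑ k, X ω k * u k, fun ω => ∑ k, Y ω k * v k; μ] = 0 := by
  have hmeas (a : κ → ℝ) : Measurable fun x : κ → ℝ => ∑ k, x k * a k := by fun_prop
  exact (hXY.comp (hmeas u) (hmeas v)).covariance_eq_zero hX hY

variable [IsFiniteMeasure μ]

theorem variance_fun_sum_le_card_mul_sum_variance {s : Finset κ} {Y : κ → Ω → ℝ}
    (hY : ∀ l ∈ s, MemLp (Y l) 2 μ) :
    Var[fun ω => ∑ l ∈ s, Y l ω; μ] ≤ #s * ∑ l ∈ s, Var[Y l; μ] := by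
  have hsum : MemLp (fun ω => ∑ l ∈ s, Y l ω) 2 μ := memLp_finsetSum s hY
  have hsq : ∀ l ∈ s, Integrable (fun ω => (Y l ω - μ[Y l]) ^ 2) μ :=
    fun l hl => ((hY l hl).sub (memLp_const _)).integrable_sq
  calc Var[fun ω => ∑ l ∈ s, Y l ω; μ]
      = ∫ ω, (∑ l ∈ s, Y l ω - ∫ x, ∑ l ∈ s, Y l x ∂μ) ^ 2 ∂μ :=
        variance_eq_integral hsum.aemeasurable
    _ = ∫ ω, (∑ l ∈ s, (Y l ω - μ[Y l])) ^ 2 ∂μ := by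
        simp only [sum_sub_distrib,
          integral_finsetSum s fun l hl => (hY l hl).integrable one_le_two]
    _ ≤ ∫ ω, (#s : ℝ) * ∑ l ∈ s, (Y l ω - μ[Y l]) ^ 2 ∂μ :=
        integral_mono_of_nonneg (.of_forall fun _ => sq_nonneg _)
          ((integrable_finsetSum s hsq).const_mul _) (.of_forall fun _ => sq_sum_le_card_mul_sum_sq)
    _ = #s * ∑ l ∈ s, Var[Y l; μ] := by
        rw [integral_const_mul, integral_finsetSum s hsq,
          sum_congr rfl fun l hl => variance_eq_integral (hY l hl).aemeasurable]

theorem variance_fun_sum_of_pairwise_covariance_eq_zero {t : Finset ι} {Y : ι → Ω → ℝ}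
    (hY : ∀ j ∈ t, MemLp (Y j) 2 μ)
    (hcov : (t : Set ι).Pairwise fun j k => cov[Y j, Y k; μ] = 0) :
    Var[fun ω => ∑ j ∈ t, Y j ω; μ] = ∑ j ∈ t, Var[Y j; μ] := by
  rw [variance_fun_sum' hY]
  refine sum_congr rfl fun j hj => ?_
  rw [sum_eq_single_of_mem j hj fun k hk hkj => hcov hj hk hkj.symm,
    covariance_self (hY j hj).aemeasurable]

theorem variance_fun_sum_mul_le_mul_sum_sq {t : Finset ι} (c : ι → ℝ) {Y : ι → Ω → ℝ} {M : ℝ}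
    (hY : ∀ j ∈ t, MemLp (Y j) 2 μ)
    (hcov : (t : Set ι).Pairwise fun j k => cov[Y j, Y k; μ] = 0)
    (hvar : ∀ j ∈ t, Var[Y j; μ] ≤ M) :
    Var[fun ω => ∑ j ∈ t, c j * Y j ω; μ] ≤ M * ∑ j ∈ t, c j ^ 2 := by
  have hcov_mul : (t : Set ι).Pairwise fun j k =>
      cov[fun ω => c j * Y j ω, fun ω => c k * Y k ω; μ] = 0 := fun j hj k hk hjk => by
    simp only [covariance_const_mul_left, covariance_const_mul_right, hcov hj hk hjk, mul_zero]
  calc Var[fun ω => ∑ j ∈ t, c j * Y j ω; μ]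
      = ∑ j ∈ t, c j ^ 2 * Var[Y j; μ] := by
        simp only [variance_fun_sum_of_pairwise_covariance_eq_zero
          (fun j hj => (hY j hj).const_mul (c j)) hcov_mul, variance_const_mul]
    _ ≤ ∑ j ∈ t, c j ^ 2 * M := by
        gcongr with j hj
        exact hvar j hj
    _ = M * ∑ j ∈ t, c j ^ 2 := by rw [← sum_mul, mul_comm]

theorem variance_sum_sum_mul_le {s : Finset κ} {t : Finset ι} (c : κ → ι → ℝ)
    {Y : κ → ι → Ω → ℝ} {M : ℝ} (hY : ∀ l ∈ s, ∀ j ∈ t, MemLp (Y l j) 2 μ)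
    (hcov : ∀ l ∈ s, (t : Set ι).Pairwise fun j k => cov[Y l j, Y l k; μ] = 0)
    (hvar : ∀ l ∈ s, ∀ j ∈ t, Var[Y l j; μ] ≤ M) :
    Var[fun ω => ∑ l ∈ s, ∑ j ∈ t, c l j * Y l j ω; μ] ≤
      M * #s * ∑ l ∈ s, ∑ j ∈ t, c l j ^ 2 :=
  calc Var[fun ω => ∑ l ∈ s, ∑ j ∈ t, c l j * Y l j ω; μ]
      ≤ #s * ∑ l ∈ s, Var[fun ω => ∑ j ∈ t, c l j * Y l j ω; μ] :=
        variance_fun_sum_le_card_mul_sum_variance fun l hl =>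
          memLp_finsetSum t fun j hj => (hY l hl j hj).const_mul _
    _ ≤ #s * ∑ l ∈ s, M * ∑ j ∈ t, c l j ^ 2 := by
        gcongr with l hl
        exact variance_fun_sum_mul_le_mul_sum_sq (c l) (hY l hl) (hcov l hl) (hvar l hl)
    _ = M * #s * ∑ l ∈ s, ∑ j ∈ t, c l j ^ 2 := by
        rw [← mul_sum, mul_left_comm, mul_assoc]

theorem rw_inverse_cv_bound_general {s : Finset κ} {t : Finset ι} (c : κ → ι → ℝ)
    {Y : κ → ι → Ω → ℝ} {M : ℝ} (hY : ∀ l ∈ s, ∀ j ∈ t, MemLp (Y l j) 2 μ)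
    (hcov : ∀ l ∈ s, (t : Set ι).Pairwise fun j k => cov[Y l j, Y l k; μ] = 0)
    (hvar : ∀ l ∈ s, ∀ j ∈ t, Var[Y l j; μ] ≤ M)
    {Z : Ω → ℝ} (hZ : ∀ ω, Z ω = ∑ l ∈ s, ∑ j ∈ t, c l j * Y l j ω)
    {β : κ → ℝ} (hβ : ∀ l, β l = ∑ j ∈ t, c l j * ∫ ω, Y l j ω ∂μ)
    {α : κ → ℝ} (hα : ∀ l, α l = ∑ j ∈ t, c l j ^ 2) :
    (∫ ω, Z ω ∂μ) = ∑ l ∈ s, β l ∧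
    Var[Z; μ] ≤ M * #s * ∑ l ∈ s, α l ∧
    (0 < Var[Z; μ] →
      (∑ l ∈ s, β l) ^ 2 / (M * #s * ∑ l ∈ s, α l) ≤ (∫ ω, Z ω ∂μ) ^ 2 / Var[Z; μ]) := by
  obtain rfl : Z = _ := funext hZ
  obtain rfl : β = _ := funext hβ
  obtain rfl : α = _ := funext hα
  have hmean := integral_sum_sum_mul c fun l hl j hj => (hY l hl j hj).integrable one_le_two
  have hvarZ := variance_sum_sum_mul_le c hY hcov hvar
  refine ⟨hmean, hvarZ, fun hpos => ?_⟩
  rw [hmean]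
  exact div_le_div_of_nonneg_left (sq_nonneg _) hpos hvarZ

end Moments

/-- Theorem 2, RW filter: lower bound on the squared inverse coefficient of
variation `R = (E[Z])²/Var[Z]` for the linearized random-walk GNN output at node `i`. -/
theorem rw_inverse_cv_bound {Ω : Type*} [MeasurableSpace Ω] (μ : Measure Ω)
    [IsProbabilityMeasure μ] {N d : ℕ}
    (A : Matrix (Fin N) (Fin N) ℝ)
    (hA01 : ∀ i j, A i j = 0 ∨ A i j = 1)
    (hAsymm : A.IsSymm)
    (deg : Fin N → ℝ) (hdeg : ∀ i, deg i = ∑ j, A i j)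
    (hdegpos : ∀ i, 0 < deg i)
    (Prw : Matrix (Fin N) (Fin N) ℝ) (hPrw : ∀ i j, Prw i j = A i j / deg i)
    (X : Fin N → Ω → Fin d → ℝ) (hXmeas : ∀ j, Measurable (X j))
    (hXindep : iIndepFun X μ)
    (i : Fin N) (L : ℕ) (w : ℕ → Fin d → ℝ) (M : ℝ) (hM : 0 ≤ M)
    (hL2 : ∀ (j : Fin N) (l : ℕ), l ≤ L →
      MemLp (fun ω => ∑ k, X j ω k * w l k) 2 μ)
    (hvar : ∀ (j : Fin N) (l : ℕ), l ≤ L →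
      variance (fun ω => ∑ k, X j ω k * w l k) μ ≤ M)
    (Z : Ω → ℝ)
    (hZ : ∀ ω, Z ω = ∑ l ∈ range (L + 1), ∑ j, (Prw ^ l) i j * ∑ k, X j ω k * w l k)
    (β : ℕ → ℝ)
    (hβ : ∀ l, β l = ∑ j, (Prw ^ l) i j * ∫ ω, (∑ k, X j ω k * w l k) ∂μ)
    (α : ℕ → ℝ)
    (hα : ∀ l, α l = ∑ j, ((Prw ^ l) i j) ^ 2) :
    (∫ ω, Z ω ∂μ) = ∑ l ∈ range (L + 1), β l ∧
    variance Z μ ≤ M * (L + 1 : ℝ) * ∑ l ∈ range (L + 1), α l ∧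
    (0 < M → 0 < variance Z μ →
      (∫ ω, Z ω ∂μ) ^ 2 / variance Z μ ≥
        (∑ l ∈ range (L + 1), β l) ^ 2 /
          (M * (L + 1 : ℝ) * ∑ l ∈ range (L + 1), α l)) := by
  have hle {l : ℕ} (hl : l ∈ range (L + 1)) : l ≤ L := mem_range_succ_iff.mp hl
  have ⟨hmean, hvarZ, hratio⟩ := rw_inverse_cv_bound_general (s := range (L + 1)) (t := univ)
    (fun l => (Prw ^ l) i) (fun l hl j _ => hL2 j l (hle hl))
    (fun l hl j _ k _ hjk => covariance_sum_mul_eq_zero_of_indepFun (hXindep.indepFun hjk)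
      (hL2 j l (hle hl)) (hL2 k l (hle hl)))
    (fun l hl j _ => hvar j l (hle hl)) hZ hβ hα
  rw [card_range, Nat.cast_add_one] at hvarZ hratio
  exact ⟨hmean, hvarZ, fun _ => hratio⟩
end

section
/- Fix a node i, an integer l ≥ 0, and a vector w ∈ ℝ^d such that each ⟨X_j, w⟩ is square-integrable. Then E[Σ_{j=1}^{N} (P_sym^l)_{ij} ⟨X_j, w⟩] = √(D_{ii}) Σ_{j=1}^{N} (P_rw^l)_{ij} D_{jj}^{-1/2} E[⟨X_j, w⟩], and if moreover Var[⟨X_j, w⟩] ≤ M for all j, then Var[Σ_{j=1}^{N} (P_sym^l)_{ij} ⟨X_j, w⟩] ≤ D_{ii} · M · Σ_{j=1}^{N} D_{jj}^{-1} ((P_rw^l)_{ij})². -/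
open MeasureTheory ProbabilityTheory Finset

/-!
Conjugation by `D^{1/2}` turns `P_rw = D⁻¹ A` into `P_sym = D^{-1/2} A D^{-1/2}`, hence `P_rw^l`
into `P_sym^l`, so `(P_sym^l)_{ij} = √D_ii (P_rw^l)_{ij} / √D_jj`. The mean is then linearity of the
integral, and the variance of a combination of uncorrelated variables only sees the squares
`D_ii (P_rw^l)_{ij}² / D_jj` of its coefficients.
-/

section NormalizedMatrices

variable {ι : Type*}

/-- The row normalization `D⁻¹ A` of a weight matrix `A` by a diagonal matrix `D`, given as the
vector of its diagonal entries. When `D` holds the degrees of a graph with adjacency matrix `A`,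
this is the transition matrix `P_rw` of the random walk. -/
noncomputable def randomWalkMatrix (D : ι → ℝ) (A : Matrix ι ι ℝ) : Matrix ι ι ℝ :=
  Matrix.of fun i j => A i j / D i

/-- The two-sided normalization `D^{-1/2} A D^{-1/2}` of a weight matrix `A` by a diagonal matrix
`D`, given as the vector of its diagonal entries. When `D` holds the degrees of a graph with
adjacency matrix `A`, this is the symmetric-normalized matrix `P_sym`. -/
noncomputable def symNormalizedMatrix (D : ι → ℝ) (A : Matrix ι ι ℝ) : Matrix ι ι ℝ :=
  Matrix.of fun i j => A i j / (√(D i) * √(D j))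

variable [Fintype ι] [DecidableEq ι] {D : ι → ℝ} (hD : ∀ i, 0 < D i) (A : Matrix ι ι ℝ)
include hD

lemma semiconjBy_randomWalkMatrix_symNormalizedMatrix :
    SemiconjBy (Matrix.diagonal fun i => √(D i)) (randomWalkMatrix D A)
      (symNormalizedMatrix D A) := by
  ext i j
  have hi : √(D i) / D i = 1 / √(D i) := Real.sqrt_div_self'
  have hj : √(D j) ≠ 0 := (Real.sqrt_pos.2 (hD j)).ne'
  calc (Matrix.diagonal (fun i => √(D i)) * randomWalkMatrix D A) i j
      = √(D i) / D i * A i j := by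
        rw [Matrix.diagonal_mul, randomWalkMatrix, Matrix.of_apply, mul_div_left_comm, mul_comm]
    _ = A i j / (√(D i) * √(D j)) * √(D j) := by rw [hi]; field_simp
    _ = (symNormalizedMatrix D A * Matrix.diagonal fun i => √(D i)) i j := by
        rw [Matrix.mul_diagonal, symNormalizedMatrix, Matrix.of_apply]

lemma symNormalizedMatrix_pow_apply (l : ℕ) (i j : ι) :
    (symNormalizedMatrix D A ^ l) i j =
      √(D i) * ((randomWalkMatrix D A ^ l) i j * (√(D j))⁻¹) := by
  have hpow := (semiconjBy_randomWalkMatrix_symNormalizedMatrix hD A).pow_right l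
  have hentry : √(D i) * (randomWalkMatrix D A ^ l) i j =
      (symNormalizedMatrix D A ^ l) i j * √(D j) := by
    simpa only [Matrix.diagonal_mul, Matrix.mul_diagonal] using congr_fun₂ hpow.eq i j
  rw [← mul_assoc, hentry, mul_inv_cancel_right₀ (Real.sqrt_pos.2 (hD j)).ne']

lemma symNormalizedMatrix_pow_apply_sq (l : ℕ) (i j : ι) :
    (symNormalizedMatrix D A ^ l) i j ^ 2 =
      D i * ((D j)⁻¹ * (randomWalkMatrix D A ^ l) i j ^ 2) := by
  rw [symNormalizedMatrix_pow_apply hD, mul_pow, mul_pow, inv_pow, Real.sq_sqrt (hD i).le,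
    Real.sq_sqrt (hD j).le, mul_comm (_ ^ 2)]

end NormalizedMatrices

section LinearCombinations

variable {Ω ι : Type*} {mΩ : MeasurableSpace Ω} {μ : Measure Ω} {s : Finset ι}

lemma integral_finsetSum_const_mul {𝕜 : Type*} [RCLike 𝕜] {Y : ι → Ω → 𝕜} (c : ι → 𝕜)
    (hY : ∀ j ∈ s, Integrable (Y j) μ) :
    ∫ ω, ∑ j ∈ s, c j * Y j ω ∂μ = ∑ j ∈ s, c j * ∫ ω, Y j ω ∂μ := by
  rw [integral_finsetSum s fun j hj => (hY j hj).const_mul (c j)]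
  simp only [integral_const_mul]

variable [IsFiniteMeasure μ] {Y : ι → Ω → ℝ}

lemma variance_finsetSum_const_mul_of_uncorrelated (c : ι → ℝ) (hY : ∀ j ∈ s, MemLp (Y j) 2 μ)
    (hcov : (s : Set ι).Pairwise fun a b => cov[Y a, Y b; μ] = 0) :
    Var[fun ω => ∑ j ∈ s, c j * Y j ω; μ] = ∑ j ∈ s, c j ^ 2 * Var[Y j; μ] := by
  have hcY : ∀ j ∈ s, MemLp (fun ω => c j * Y j ω) 2 μ := fun j hj => (hY j hj).const_mul (c j)
  rw [variance_fun_sum' hcY]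
  refine sum_congr rfl fun a ha => ?_
  calc ∑ b ∈ s, cov[fun ω => c a * Y a ω, fun ω => c b * Y b ω; μ]
      = cov[fun ω => c a * Y a ω, fun ω => c a * Y a ω; μ] := by
        refine sum_eq_single_of_mem a ha fun b hb hba => ?_
        rw [covariance_const_mul_left, covariance_const_mul_right, hcov ha hb hba.symm, mul_zero,
          mul_zero]
    _ = c a ^ 2 * Var[Y a; μ] := by
        rw [covariance_self (hcY a ha).aemeasurable, variance_const_mul]

lemma variance_finsetSum_const_mul_le_of_uncorrelated (c : ι → ℝ) (hY : ∀ j ∈ s, MemLp (Y j) 2 μ)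
    (hcov : (s : Set ι).Pairwise fun a b => cov[Y a, Y b; μ] = 0) {M : ℝ}
    (hM : ∀ j ∈ s, Var[Y j; μ] ≤ M) :
    Var[fun ω => ∑ j ∈ s, c j * Y j ω; μ] ≤ M * ∑ j ∈ s, c j ^ 2 := by
  rw [variance_finsetSum_const_mul_of_uncorrelated c hY hcov, mul_comm, sum_mul]
  gcongr with j hj
  exact hM j hj

end LinearCombinations

theorem sym_layer_mean_variance_general {Ω ι : Type*} {mΩ : MeasurableSpace Ω} {μ : Measure Ω}
    [IsFiniteMeasure μ] [Fintype ι] [DecidableEq ι] (A : Matrix ι ι ℝ) {D : ι → ℝ}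
    (hD : ∀ i, 0 < D i) {Y : ι → Ω → ℝ} (hY : ∀ j, MemLp (Y j) 2 μ)
    (hcov : Pairwise fun a b => cov[Y a, Y b; μ] = 0) (i : ι) (l : ℕ) :
    ∫ ω, ∑ j, (symNormalizedMatrix D A ^ l) i j * Y j ω ∂μ =
      √(D i) * ∑ j, (randomWalkMatrix D A ^ l) i j * (√(D j))⁻¹ * ∫ ω, Y j ω ∂μ ∧
    ∀ M : ℝ, (∀ j, Var[Y j; μ] ≤ M) →
      Var[fun ω => ∑ j, (symNormalizedMatrix D A ^ l) i j * Y j ω; μ] ≤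
        D i * M * ∑ j, (D j)⁻¹ * (randomWalkMatrix D A ^ l) i j ^ 2 := by
  constructor
  · rw [integral_finsetSum_const_mul _ fun j _ => (hY j).integrable one_le_two]
    simp only [symNormalizedMatrix_pow_apply hD, mul_sum, mul_assoc]
  · intro M hM
    calc Var[fun ω => ∑ j, (symNormalizedMatrix D A ^ l) i j * Y j ω; μ]
        ≤ M * ∑ j, (symNormalizedMatrix D A ^ l) i j ^ 2 :=
          variance_finsetSum_const_mul_le_of_uncorrelated _ (fun j _ => hY j)
            (hcov.set_pairwise _) fun j _ => hM j
      _ = D i * M * ∑ j, (D j)⁻¹ * (randomWalkMatrix D A ^ l) i j ^ 2 := by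
          simp only [symNormalizedMatrix_pow_apply_sq hD]
          rw [← mul_sum, mul_left_comm, mul_assoc]

/-- for a single layer `l` of the symmetric-normalized filter, the
expectation of `Σ_j (P_sym^l)_{ij} ⟨X_j, w⟩` equals
`√(D_ii) Σ_j (P_rw^l)_{ij} D_jj^{-1/2} E[⟨X_j, w⟩]`, and if each `Var[⟨X_j, w⟩] ≤ M`
then its variance is at most `D_ii · M · Σ_j D_jj^{-1} ((P_rw^l)_{ij})²`. -/
theorem sym_layer_mean_variance {Ω : Type*} [MeasurableSpace Ω] (μ : Measure Ω)
    [IsProbabilityMeasure μ] {N d : ℕ}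
    (A : Matrix (Fin N) (Fin N) ℝ)
    (hA01 : ∀ i j, A i j = 0 ∨ A i j = 1)
    (hAsymm : A.IsSymm)
    (deg : Fin N → ℝ) (hdeg : ∀ i, deg i = ∑ j, A i j)
    (hdegpos : ∀ i, 0 < deg i)
    (Prw : Matrix (Fin N) (Fin N) ℝ) (hPrw : ∀ i j, Prw i j = A i j / deg i)
    (Psym : Matrix (Fin N) (Fin N) ℝ)
    (hPsym : ∀ i j, Psym i j = A i j / (Real.sqrt (deg i) * Real.sqrt (deg j)))
    (X : Fin N → Ω → Fin d → ℝ) (hXmeas : ∀ j, Measurable (X j))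
    (hXindep : iIndepFun X μ)
    (i : Fin N) (l : ℕ) (w : Fin d → ℝ)
    (hL2 : ∀ j : Fin N, MemLp (fun ω => ∑ k, X j ω k * w k) 2 μ) :
    (∫ ω, (∑ j, (Psym ^ l) i j * ∑ k, X j ω k * w k) ∂μ) =
      Real.sqrt (deg i) *
        ∑ j, (Prw ^ l) i j * (Real.sqrt (deg j))⁻¹ * ∫ ω, (∑ k, X j ω k * w k) ∂μ ∧
    ∀ M : ℝ, (∀ j : Fin N, variance (fun ω => ∑ k, X j ω k * w k) μ ≤ M) →
      variance (fun ω => ∑ j, (Psym ^ l) i j * ∑ k, X j ω k * w k) μ ≤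
        deg i * M * ∑ j, (deg j)⁻¹ * ((Prw ^ l) i j) ^ 2 := by
  obtain rfl : Prw = randomWalkMatrix deg A := Matrix.ext hPrw
  obtain rfl : Psym = symNormalizedMatrix deg A := Matrix.ext hPsym
  have hindep := hXindep.comp (fun _ x => ∑ k, x k * w k) fun _ => by fun_prop
  exact sym_layer_mean_variance_general A hdegpos hL2
    (fun a b hab => (hindep.indepFun hab).covariance_eq_zero (hL2 a) (hL2 b)) i l
end
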